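/- Let F ∈ ℓ¹(ℤ^d) and G ∈ ℓ²(ℤ^d) with G ≥ 0, and suppose (F * G)(x) = δ_{0,x} for all x ∈ ℤ^d. If ∑_{x∈ℤ^d} G(x) = ∞ then ∑_{x∈ℤ^d} F(x) = 0. -/

import Mathlib

/-!
Suppose `s = ∑ F ≠ 0` and smooth `G` to `G_η a = ∑ y, exp (-η ‖a - y‖) G y`. Since `G ≥ 0`, moving
the argument by `z` changes `G_η` by a factor of at most `exp (η ‖z‖)`. Convolving with `F ∈ ℓ¹`
therefore acts on `G_η` almost as multiplication by `s`, with an error `o(1) · sup G_η` as `η → 0`.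
On the other hand `F * G_η` is the smoothing of `F * G`, which is at most `‖F * G‖₁`. Hence
`|s| sup G_η ≤ ‖F * G‖₁ + o(1) · sup G_η`, so `G_η 0`, which tends to `∑ G`, stays bounded.
-/

open Filter Topology Real

/-- Subexponential growth of a group with a length function `‖·‖`, encoded as convergence of
`∑ exp (-η ‖x‖)` for all `η > 0` rather than through the cardinality of balls. -/
def HasSubexponentialGrowth (X : Type*) [Norm X] : Prop :=
  ∀ η : ℝ, 0 < η → Summable fun x : X => exp (-η * ‖x‖)

theorem bddAbove_range_of_summable_sq {α : Type*} {f : α → ℝ} (hf : Summable fun x => f x ^ 2) :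
    BddAbove (Set.range f) :=
  ⟨√(∑' x, f x ^ 2), Set.forall_mem_range.2 fun x =>
    le_sqrt_of_sq_le (hf.le_tsum x fun _ _ => sq_nonneg _)⟩

theorem summable_prod_apply {ι : Type*} [Fintype ι] {α : ι → Type*} {f : ∀ i, α i → ℝ}
    (hf : ∀ i, Summable (f i)) (hf0 : ∀ i a, 0 ≤ f i a) :
    Summable fun x : ∀ i, α i => ∏ i, f i (x i) := by
  classical
  refine summable_of_sum_le (c := ∏ i, ∑' a, f i a)
    (fun x => Finset.prod_nonneg fun i _ => hf0 i (x i)) fun S => ?_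
  let box : Finset (∀ i, α i) := Fintype.piFinset fun i => S.image fun x => x i
  have subset_box : S ⊆ box := fun x hx =>
    Fintype.mem_piFinset.2 fun i => Finset.mem_image_of_mem (fun x => x i) hx
  calc ∑ x ∈ S, ∏ i, f i (x i)
      ≤ ∑ x ∈ box, ∏ i, f i (x i) :=
        Finset.sum_le_sum_of_subset_of_nonneg subset_box fun x _ _ =>
          Finset.prod_nonneg fun i _ => hf0 i (x i)
    _ = ∏ i, ∑ a ∈ S.image fun x => x i, f i a := (Finset.prod_univ_sum _ _).symm
    _ ≤ ∏ i, ∑' a, f i a :=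
        Finset.prod_le_prod (fun i _ => Finset.sum_nonneg fun a _ => hf0 i a) fun i _ =>
          (hf i).sum_le_tsum _ fun a _ => hf0 i a

namespace HasSubexponentialGrowth

theorem int : HasSubexponentialGrowth ℤ := by
  intro η hη
  have summable_nat : Summable fun n : ℕ => exp (-η * n) := by
    simpa only [mul_comm] using Real.summable_exp_nat_mul_iff.2 (neg_lt_zero.2 hη)
  refine Summable.of_nat_of_neg ?_ ?_ <;>
    simpa only [norm_neg, Int.norm_natCast] using summable_nat

theorem pi {ι : Type*} [Fintype ι] {X : ι → Type*} [∀ i, SeminormedAddCommGroup (X i)]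
    (h : ∀ i, HasSubexponentialGrowth (X i)) : HasSubexponentialGrowth (∀ i, X i) := by
  intro η hη
  let ε : ℝ := η / (Fintype.card ι + 1)
  have hε : 0 < ε := by positivity
  refine Summable.of_nonneg_of_le (fun x => (exp_pos _).le) (fun x => ?_)
    (summable_prod_apply (fun i => h i ε hε) fun i x => (exp_pos _).le)
  have sum_norm_le : ε * ∑ i, ‖x i‖ ≤ η * ‖x‖ :=
    calc ε * ∑ i, ‖x i‖ ≤ ε * (Fintype.card ι * ‖x‖) := by
          gcongr
          simpa only [nsmul_eq_mul] using Pi.sum_norm_apply_le_norm x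
      _ ≤ ε * ((Fintype.card ι + 1) * ‖x‖) := by gcongr; linarith
      _ = η * ‖x‖ := by simp only [ε]; field_simp
  rw [← exp_sum, ← Finset.mul_sum, exp_le_exp]
  simpa only [neg_mul, neg_le_neg_iff] using sum_norm_le

end HasSubexponentialGrowth

variable {X E : Type*} [SeminormedAddCommGroup X] [NormedAddCommGroup E]

/-- The smoothing `G_η` of `G`: its convolution with the kernel `exp (-η ‖·‖)`. -/
noncomputable def expSmoothing (η : ℝ) (G : X → ℝ) (a : X) : ℝ :=
  ∑' y, exp (-η * ‖a - y‖) * G y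

/-- The `ℓ¹` norm of `F` with weight `min 1 (exp (η ‖z‖) - 1)`. If `G_η` takes values in `[0, 1]`,
the weight bounds its change under translation by `z`, so the total bounds the error made when
`F * G_η` is replaced by `(∑ F) G_η`. -/
noncomputable def translationDefect (η : ℝ) (F : X → E) : ℝ :=
  ∑' z, min 1 (exp (η * ‖z‖) - 1) * ‖F z‖

theorem norm_translationDefect_term_le {η : ℝ} (hη : 0 ≤ η) (F : X → E) (z : X) :
    ‖min 1 (exp (η * ‖z‖) - 1) * ‖F z‖‖ ≤ ‖F z‖ := by
  have weight_nonneg : 0 ≤ min 1 (exp (η * ‖z‖) - 1) :=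
    le_min zero_le_one (sub_nonneg.2 (one_le_exp (by positivity)))
  rw [norm_mul, norm_norm, norm_of_nonneg weight_nonneg]
  exact mul_le_of_le_one_left (norm_nonneg _) (min_le_left _ _)

theorem tendsto_translationDefect {F : X → E} (hF : Summable fun x => ‖F x‖) :
    Tendsto (fun η => translationDefect η F) (𝓝[>] 0) (𝓝 0) := by
  have weight_tendsto (z : X) :
      Tendsto (fun η : ℝ => min 1 (exp (η * ‖z‖) - 1) * ‖F z‖) (𝓝[>] 0) (𝓝 0) := by
    have : Continuous fun η : ℝ => min 1 (exp (η * ‖z‖) - 1) * ‖F z‖ := by fun_prop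
    simpa using (this.tendsto 0).mono_left nhdsWithin_le_nhds
  have tendsto_tsum := tendsto_tsum_of_dominated_convergence hF weight_tendsto <| by
    filter_upwards [self_mem_nhdsWithin] with η hη z
    exact norm_translationDefect_term_le (le_of_lt hη) F z
  simpa only [translationDefect, tsum_zero] using tendsto_tsum

section Smoothing

variable {η C M : ℝ} {G : X → ℝ} {F : X → E}

theorem exp_neg_mul_norm_le_one (hη : 0 ≤ η) (x : X) : exp (-η * ‖x‖) ≤ 1 :=
  exp_le_one_iff.2 (mul_nonpos_of_nonpos_of_nonneg (neg_nonpos.2 hη) (norm_nonneg x))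

theorem summable_exp_neg_mul_norm_sub (hexp : Summable fun x : X => exp (-η * ‖x‖)) (a : X) :
    Summable fun y => exp (-η * ‖a - y‖) :=
  (Equiv.subLeft a).summable_iff.2 hexp

theorem summable_exp_mul_of_bounded (hexp : Summable fun x : X => exp (-η * ‖x‖))
    (hG : ∀ y, 0 ≤ G y) (hGC : ∀ y, G y ≤ C) (a : X) :
    Summable fun y => exp (-η * ‖a - y‖) * G y :=
  Summable.of_nonneg_of_le (fun y => mul_nonneg (exp_pos _).le (hG y))
    (fun y => mul_le_mul_of_nonneg_left (hGC y) (exp_pos _).le)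
    ((summable_exp_neg_mul_norm_sub hexp a).mul_right C)

theorem expSmoothing_nonneg (hG : ∀ y, 0 ≤ G y) (a : X) : 0 ≤ expSmoothing η G a :=
  tsum_nonneg fun y => mul_nonneg (exp_pos _).le (hG y)

theorem bddAbove_range_expSmoothing (hexp : Summable fun x : X => exp (-η * ‖x‖))
    (hG : ∀ y, 0 ≤ G y) (hGC : ∀ y, G y ≤ C) : BddAbove (Set.range (expSmoothing η G)) := by
  refine ⟨(∑' x : X, exp (-η * ‖x‖)) * C, Set.forall_mem_range.2 fun a => ?_⟩
  calc expSmoothing η G a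
      ≤ ∑' y, exp (-η * ‖a - y‖) * C :=
        (summable_exp_mul_of_bounded hexp hG hGC a).tsum_le_tsum
          (fun y => mul_le_mul_of_nonneg_left (hGC y) (exp_pos _).le)
          ((summable_exp_neg_mul_norm_sub hexp a).mul_right C)
    _ = (∑' x : X, exp (-η * ‖x‖)) * C := by
        rw [tsum_mul_right, ← (Equiv.subLeft a).tsum_eq fun x : X => exp (-η * ‖x‖)]
        rfl

theorem expSmoothing_le_exp_mul (hη : 0 ≤ η) (hexp : Summable fun x : X => exp (-η * ‖x‖))
    (hG : ∀ y, 0 ≤ G y) (hGC : ∀ y, G y ≤ C) (a b : X) :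
    expSmoothing η G a ≤ exp (η * ‖a - b‖) * expSmoothing η G b := by
  simp only [expSmoothing, ← tsum_mul_left, ← mul_assoc, ← exp_add]
  refine (summable_exp_mul_of_bounded hexp hG hGC a).tsum_le_tsum (fun y => ?_) ?_
  · have norm_le : ‖b - y‖ ≤ ‖a - y‖ + ‖a - b‖ := by
      simpa only [norm_sub_rev b a, add_comm] using norm_sub_le_norm_sub_add_norm_sub b a y
    have := mul_le_mul_of_nonneg_left norm_le hη
    gcongr
    · exact hG y
    · linarith
  · simpa only [exp_add, mul_assoc] using
      (summable_exp_mul_of_bounded hexp hG hGC b).mul_left (exp (η * ‖a - b‖))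

theorem abs_expSmoothing_sub_le (hη : 0 ≤ η) (hexp : Summable fun x : X => exp (-η * ‖x‖))
    (hG : ∀ y, 0 ≤ G y) (hGC : ∀ y, G y ≤ C) (hM : ∀ a, expSmoothing η G a ≤ M) (a z : X) :
    |expSmoothing η G a - expSmoothing η G (a - z)| ≤ min 1 (exp (η * ‖z‖) - 1) * M := by
  have exp_ge : 0 ≤ exp (η * ‖z‖) - 1 := sub_nonneg.2 (one_le_exp (by positivity))
  have sub_le : ∀ b c : X, ‖b - c‖ = ‖z‖ →
      expSmoothing η G b - expSmoothing η G c ≤ min 1 (exp (η * ‖z‖) - 1) * M := by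
    intro b c hbc
    have hb := expSmoothing_le_exp_mul hη hexp hG hGC b c
    rw [hbc] at hb
    have hc := mul_le_mul_of_nonneg_left (hM c) exp_ge
    rw [min_mul_of_nonneg _ _ ((expSmoothing_nonneg hG c).trans (hM c)), le_min_iff]
    exact ⟨by linarith [hM b, expSmoothing_nonneg (η := η) hG c], by linarith⟩
  rw [abs_le']
  refine ⟨sub_le a (a - z) (by rw [sub_sub_cancel]), ?_⟩
  rw [neg_sub]
  exact sub_le (a - z) a (by rw [norm_sub_rev, sub_sub_cancel])

variable [NormedSpace ℝ E] [CompleteSpace E]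

theorem tsum_expSmoothing_smul_eq (hexp : Summable fun x : X => exp (-η * ‖x‖))
    (hF : Summable fun x => ‖F x‖) (hG : ∀ y, 0 ≤ G y) (hGC : ∀ y, G y ≤ C) (a : X) :
    ∑' z, expSmoothing η G (a - z) • F z =
      ∑' x, exp (-η * ‖a - x‖) • ∑' y, G y • F (x - y) := by
  have summable_triple :
      Summable fun p : X × X => (exp (-η * ‖a - p.1‖) * G (p.1 - p.2)) • F p.2 := by
    refine Summable.of_norm_bounded
      (((summable_exp_neg_mul_norm_sub hexp a).mul_of_nonneg hF (fun x => (exp_pos _).le)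
        fun z => norm_nonneg _).mul_left C) fun p => ?_
    rw [norm_smul, norm_mul, norm_of_nonneg (exp_pos _).le, norm_of_nonneg (hG _)]
    calc exp (-η * ‖a - p.1‖) * G (p.1 - p.2) * ‖F p.2‖
        ≤ exp (-η * ‖a - p.1‖) * C * ‖F p.2‖ := by gcongr; exact hGC _
      _ = C * (exp (-η * ‖a - p.1‖) * ‖F p.2‖) := by ring
  have shift_smoothing (z : X) : ∑' x, (exp (-η * ‖a - x‖) * G (x - z)) • F z =
      expSmoothing η G (a - z) • F z := by
    rw [expSmoothing, ← (summable_exp_mul_of_bounded hexp hG hGC (a - z)).tsum_smul_const,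
      ← (Equiv.subRight z).tsum_eq fun y => (exp (-η * ‖a - z - y‖) * G y) • F z]
    simp only [Equiv.subRight_apply, sub_sub_sub_cancel_right]
  have flip_convolution (x : X) : ∑' z, (exp (-η * ‖a - x‖) * G (x - z)) • F z =
      exp (-η * ‖a - x‖) • ∑' y, G y • F (x - y) := by
    rw [← (Equiv.subLeft x).tsum_eq fun y => G y • F (x - y)]
    simp only [Equiv.subLeft_apply, sub_sub_cancel, mul_smul]
    exact tsum_const_smul'' _
  simp only [← shift_smoothing, ← flip_convolution]
  exact Summable.tsum_comm (f := fun x z => (exp (-η * ‖a - x‖) * G (x - z)) • F z) summable_triple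

theorem norm_tsum_mul_expSmoothing_le (hη : 0 ≤ η)
    (hexp : Summable fun x : X => exp (-η * ‖x‖)) (hF : Summable fun x => ‖F x‖)
    (hG : ∀ y, 0 ≤ G y) (hGC : ∀ y, G y ≤ C)
    (hFG : Summable fun x => ‖∑' y, G y • F (x - y)‖) (hM : ∀ a, expSmoothing η G a ≤ M) (a : X) :
    ‖∑' x, F x‖ * expSmoothing η G a ≤
      ∑' x, ‖∑' y, G y • F (x - y)‖ + translationDefect η F * M := by
  have hGF : Summable fun z => expSmoothing η G (a - z) • F z := by
    refine Summable.of_norm_bounded (hF.mul_left M) fun z => ?_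
    rw [norm_smul, norm_of_nonneg (expSmoothing_nonneg hG _)]
    exact mul_le_mul_of_nonneg_right (hM _) (norm_nonneg _)
  have hdefect : Summable fun z => min 1 (exp (η * ‖z‖) - 1) * ‖F z‖ :=
    .of_norm_bounded hF (norm_translationDefect_term_le hη F)
  have conv_le : ‖∑' z, expSmoothing η G (a - z) • F z‖ ≤ ∑' x, ‖∑' y, G y • F (x - y)‖ := by
    rw [tsum_expSmoothing_smul_eq hexp hF hG hGC]
    refine tsum_of_norm_bounded hFG.hasSum fun x => ?_
    rw [norm_smul, norm_of_nonneg (exp_pos _).le]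
    exact mul_le_of_le_one_left (norm_nonneg _) (exp_neg_mul_norm_le_one hη _)
  have sub_le : ‖expSmoothing η G a • ∑' z, F z - ∑' z, expSmoothing η G (a - z) • F z‖ ≤
      translationDefect η F * M := by
    rw [← hF.of_norm.tsum_const_smul, ← (hF.of_norm.const_smul _).tsum_sub hGF]
    refine tsum_of_norm_bounded (hdefect.hasSum.mul_right M) fun z => ?_
    rw [← sub_smul, norm_smul, mul_right_comm]
    exact mul_le_mul_of_nonneg_right (abs_expSmoothing_sub_le hη hexp hG hGC hM a z) (norm_nonneg _)
  calc ‖∑' x, F x‖ * expSmoothing η G a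
      = ‖expSmoothing η G a • ∑' x, F x‖ := by
        rw [norm_smul, norm_of_nonneg (expSmoothing_nonneg hG a), mul_comm]
    _ ≤ ∑' x, ‖∑' y, G y • F (x - y)‖ + translationDefect η F * M :=
        (norm_le_norm_add_norm_sub' _ _).trans (add_le_add conv_le sub_le)

theorem expSmoothing_le_of_translationDefect_le (hη : 0 ≤ η)
    (hexp : Summable fun x : X => exp (-η * ‖x‖)) (hF : Summable fun x => ‖F x‖)
    (hG : ∀ y, 0 ≤ G y) (hGC : ∀ y, G y ≤ C)
    (hFG : Summable fun x => ‖∑' y, G y • F (x - y)‖) (hs : ∑' x, F x ≠ 0)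
    (hdefect : translationDefect η F ≤ ‖∑' x, F x‖ / 2) (a : X) :
    expSmoothing η G a ≤ 2 * (∑' x, ‖∑' y, G y • F (x - y)‖) / ‖∑' x, F x‖ := by
  have hs_pos : 0 < ‖∑' x, F x‖ := norm_pos_iff.2 hs
  let M := ⨆ a, expSmoothing η G a
  have le_M : ∀ a, expSmoothing η G a ≤ M := le_ciSup (bddAbove_range_expSmoothing hexp hG hGC)
  have M_nonneg : 0 ≤ M := (expSmoothing_nonneg hG a).trans (le_M a)
  have M_le : M ≤ (∑' x, ‖∑' y, G y • F (x - y)‖ + ‖∑' x, F x‖ / 2 * M) / ‖∑' x, F x‖ := by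
    refine ciSup_le fun b => (le_div_iff₀' hs_pos).2 ?_
    grw [norm_tsum_mul_expSmoothing_le hη hexp hF hG hGC hFG le_M b, hdefect]
  rw [le_div_iff₀' hs_pos] at M_le
  rw [le_div_iff₀' hs_pos]
  linarith [mul_le_mul_of_nonneg_left (le_M a) hs_pos.le]

end Smoothing

theorem summable_of_eventually_expSmoothing_le (hX : HasSubexponentialGrowth X) {G : X → ℝ}
    {B C : ℝ} (hG : ∀ y, 0 ≤ G y) (hGC : ∀ y, G y ≤ C) (a : X)
    (hB : ∀ᶠ η in 𝓝[>] 0, expSmoothing η G a ≤ B) : Summable G := by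
  refine summable_of_sum_le (c := B) hG fun S => ?_
  have tendsto_sum : Tendsto (fun η : ℝ => ∑ y ∈ S, exp (-η * ‖a - y‖) * G y) (𝓝[>] 0)
      (𝓝 (∑ y ∈ S, G y)) := by
    have : Continuous fun η : ℝ => ∑ y ∈ S, exp (-η * ‖a - y‖) * G y := by fun_prop
    simpa using (this.tendsto 0).mono_left nhdsWithin_le_nhds
  refine le_of_tendsto tendsto_sum ?_
  filter_upwards [hB, self_mem_nhdsWithin] with η hηB hη
  exact ((summable_exp_mul_of_bounded (hX η hη) hG hGC a).sum_le_tsum S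
    fun y _ => mul_nonneg (exp_pos _).le (hG y)).trans hηB

theorem stmt0_general [NormedSpace ℝ E] [CompleteSpace E] (hX : HasSubexponentialGrowth X)
    (F : X → E) (G : X → ℝ) (hF : Summable fun x => ‖F x‖)
    (hGbdd : BddAbove (Set.range G)) (hGpos : ∀ x, 0 ≤ G x)
    (hconv : Summable fun x => ‖∑' y, G y • F (x - y)‖) (hdiv : ¬ Summable G) :
    ∑' x, F x = 0 := by
  obtain ⟨C, hC⟩ := hGbdd
  have hGC : ∀ y, G y ≤ C := Set.forall_mem_range.1 hC
  by_contra hs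
  have hs_half : 0 < ‖∑' x, F x‖ / 2 := half_pos (norm_pos_iff.2 hs)
  refine hdiv (summable_of_eventually_expSmoothing_le hX hGpos hGC 0
    (B := 2 * (∑' x, ‖∑' y, G y • F (x - y)‖) / ‖∑' x, F x‖) ?_)
  filter_upwards [(tendsto_translationDefect hF).eventually_le_const hs_half,
    self_mem_nhdsWithin] with η hdefect hη
  exact expSmoothing_le_of_translationDefect_le (le_of_lt hη) (hX η hη) hF hGpos hGC hconv hs
    hdefect 0

/-- If `F ∈ ℓ¹(ℤ^d)`, `G ∈ ℓ²(ℤ^d)` with `G ≥ 0`, `(F*G)(x) = δ_{0,x}` for all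
`x`, and `∑ G = ∞` (i.e. the nonnegative function `G` is not summable), then `∑ F = 0`. -/
theorem stmt0 (d : ℕ) (F G : (Fin d → ℤ) → ℝ)
    (hF : Summable (fun x => |F x|))
    (hG2 : Summable (fun x => (G x) ^ 2))
    (hGpos : ∀ x, 0 ≤ G x)
    (hconv : ∀ x : Fin d → ℤ, ∑' y, F (x - y) * G y = if x = 0 then 1 else 0)
    (hdiv : ¬ Summable G) :
    ∑' x, F x = 0 := by
  refine stmt0_general (.pi fun _ => .int) F G hF (bddAbove_range_of_summable_sq hG2) hGpos ?_ hdiv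
  simp only [smul_eq_mul, mul_comm (G _), hconv]
  exact summable_of_ne_finset_zero (s := {0}) (by simp +contextual)
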